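/- Assume l0, l1, l2, l3 ∈ ℤ_{≥0} with l0 + l3 = l1 + l2 + 1, l0 + l1 ≥ l2 + l3 + 1 and l0 + l2 ≥ l1 + l3 + 1, and let e1 > e3 > e2 be real numbers with e1+e2+e3 = 0 (corresponding to a purely imaginary modulus τ ∈ iℝ_{>0}). Then all the zeros of the spectral polynomial Q^{(l0,l1,l2,l3)}(E) are real and unequal. -/

import Mathlib

open Polynomial

/-- The polynomial `q(E) = −(E/4 − e1(ã2+ã3)² − e2(ã1+ã3)² − e3(ã1+ã2)² + e3·α·β)`,
where `α = ã0+ã1+ã2+ã3` and `β = −ã0+1/2+ã1+ã2+ã3`. -/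
noncomputable def heunQE (e1 e2 e3 a0 a1 a2 a3 : ℝ) : Polynomial ℝ :=
  Polynomial.C (e1 * (a2 + a3) ^ 2 + e2 * (a1 + a3) ^ 2 + e3 * (a1 + a2) ^ 2
      - e3 * ((a0 + a1 + a2 + a3) * (-a0 + 1 / 2 + a1 + a2 + a3)))
    - Polynomial.C (1 / 4 : ℝ) * Polynomial.X

/-- The coefficients `c_m` (polynomials in `E`) of the local Heun solution at `e3`, defined by
`c_0 = 1`, `(e1−e3)(e2−e3)γ3 c_1 = q(E)`, and for `m ≥ 1`
`(e1−e3)(e2−e3)(m+1)(m+γ3) c_{m+1} = −(m−1+α)(m−1+β) c_{m−1}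
  + [m((m−1+γ3)(e1+e2−2e3) + (e2−e3)γ1 + (e1−e3)γ2) + q(E)] c_m`,
with `γ_i = 2ã_i + 1/2`, `α = ã0+ã1+ã2+ã3`, `β = −ã0+1/2+ã1+ã2+ã3`. -/
noncomputable def heunC (e1 e2 e3 a0 a1 a2 a3 : ℝ) : ℕ → Polynomial ℝ
  | 0 => 1
  | 1 => Polynomial.C (((e1 - e3) * (e2 - e3) * (2 * a3 + 1 / 2))⁻¹)
      * heunQE e1 e2 e3 a0 a1 a2 a3
  | m + 2 =>
      Polynomial.C (((e1 - e3) * (e2 - e3) * ((m : ℝ) + 2) * ((m : ℝ) + 1 + (2 * a3 + 1 / 2)))⁻¹) *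
        (Polynomial.C (-(((m : ℝ) + (a0 + a1 + a2 + a3))
              * ((m : ℝ) + (-a0 + 1 / 2 + a1 + a2 + a3))))
            * heunC e1 e2 e3 a0 a1 a2 a3 m
          + (Polynomial.C (((m : ℝ) + 1) * (((m : ℝ) + (2 * a3 + 1 / 2)) * (e1 + e2 - 2 * e3)
                + (e2 - e3) * (2 * a1 + 1 / 2) + (e1 - e3) * (2 * a2 + 1 / 2)))
              + heunQE e1 e2 e3 a0 a1 a2 a3) * heunC e1 e2 e3 a0 a1 a2 a3 (m + 1))

/-- `P_{ã0,ã1,ã2,ã3}(E)`: the monic normalization of `c_{N+1}(E)`,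
where `N = −(ã0+ã1+ã2+ã3)`. -/
noncomputable def specP (e1 e2 e3 a0 a1 a2 a3 : ℝ) (N : ℕ) : Polynomial ℝ :=
  Polynomial.C ((heunC e1 e2 e3 a0 a1 a2 a3 (N + 1)).leadingCoeff)⁻¹ *
    heunC e1 e2 e3 a0 a1 a2 a3 (N + 1)

/-- The factor `P⁽⁰⁾(E)` of the spectral polynomial. -/
noncomputable def specP0 (e1 e2 e3 : ℝ) (l0 l1 l2 l3 : ℕ) : Polynomial ℝ :=
  if (l0 + l1 + l2 + l3) % 2 = 0 then
    specP e1 e2 e3 (-(l0 : ℝ) / 2) (-(l1 : ℝ) / 2) (-(l2 : ℝ) / 2) (-(l3 : ℝ) / 2)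
      ((l0 + l1 + l2 + l3) / 2)
  else if l1 + l2 + l3 + 3 ≤ l0 then
    specP e1 e2 e3 (-(l0 : ℝ) / 2) (((l1 : ℝ) + 1) / 2) (((l2 : ℝ) + 1) / 2) (((l3 : ℝ) + 1) / 2)
      ((l0 - l1 - l2 - l3 - 3) / 2)
  else if l0 = l1 + l2 + l3 + 1 then 1
  else
    specP e1 e2 e3 (((l0 : ℝ) + 1) / 2) (-(l1 : ℝ) / 2) (-(l2 : ℝ) / 2) (-(l3 : ℝ) / 2)
      ((l1 + l2 + l3 - l0 - 1) / 2)

/-- The factor `P⁽¹⁾(E)` of the spectral polynomial. -/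
noncomputable def specP1 (e1 e2 e3 : ℝ) (l0 l1 l2 l3 : ℕ) : Polynomial ℝ :=
  if (l0 + l1 + l2 + l3) % 2 = 0 then
    if l2 + l3 + 2 ≤ l0 + l1 then
      specP e1 e2 e3 (-(l0 : ℝ) / 2) (-(l1 : ℝ) / 2) (((l2 : ℝ) + 1) / 2) (((l3 : ℝ) + 1) / 2)
        ((l0 + l1 - l2 - l3) / 2 - 1)
    else if l0 + l1 = l2 + l3 then 1
    else
      specP e1 e2 e3 (((l0 : ℝ) + 1) / 2) (((l1 : ℝ) + 1) / 2) (-(l2 : ℝ) / 2) (-(l3 : ℝ) / 2)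
        ((l2 + l3 - l0 - l1) / 2 - 1)
  else
    if l0 + l2 + l3 + 3 ≤ l1 then
      specP e1 e2 e3 (((l0 : ℝ) + 1) / 2) (-(l1 : ℝ) / 2) (((l2 : ℝ) + 1) / 2) (((l3 : ℝ) + 1) / 2)
        ((l1 - l0 - l2 - l3 - 3) / 2)
    else if l1 = l0 + l2 + l3 + 1 then 1
    else
      specP e1 e2 e3 (-(l0 : ℝ) / 2) (((l1 : ℝ) + 1) / 2) (-(l2 : ℝ) / 2) (-(l3 : ℝ) / 2)
        ((l0 + l2 + l3 - l1 - 1) / 2)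

/-- The factor `P⁽²⁾(E)` of the spectral polynomial. -/
noncomputable def specP2 (e1 e2 e3 : ℝ) (l0 l1 l2 l3 : ℕ) : Polynomial ℝ :=
  if (l0 + l1 + l2 + l3) % 2 = 0 then
    if l1 + l3 + 2 ≤ l0 + l2 then
      specP e1 e2 e3 (-(l0 : ℝ) / 2) (((l1 : ℝ) + 1) / 2) (-(l2 : ℝ) / 2) (((l3 : ℝ) + 1) / 2)
        ((l0 + l2 - l1 - l3) / 2 - 1)
    else if l0 + l2 = l1 + l3 then 1
    else
      specP e1 e2 e3 (((l0 : ℝ) + 1) / 2) (-(l1 : ℝ) / 2) (((l2 : ℝ) + 1) / 2) (-(l3 : ℝ) / 2)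
        ((l1 + l3 - l0 - l2) / 2 - 1)
  else
    if l0 + l1 + l3 + 3 ≤ l2 then
      specP e1 e2 e3 (((l0 : ℝ) + 1) / 2) (((l1 : ℝ) + 1) / 2) (-(l2 : ℝ) / 2) (((l3 : ℝ) + 1) / 2)
        ((l2 - l0 - l1 - l3 - 3) / 2)
    else if l2 = l0 + l1 + l3 + 1 then 1
    else
      specP e1 e2 e3 (-(l0 : ℝ) / 2) (-(l1 : ℝ) / 2) (((l2 : ℝ) + 1) / 2) (-(l3 : ℝ) / 2)
        ((l0 + l1 + l3 - l2 - 1) / 2)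

/-- The factor `P⁽³⁾(E)` of the spectral polynomial. -/
noncomputable def specP3 (e1 e2 e3 : ℝ) (l0 l1 l2 l3 : ℕ) : Polynomial ℝ :=
  if (l0 + l1 + l2 + l3) % 2 = 0 then
    if l1 + l2 + 2 ≤ l0 + l3 then
      specP e1 e2 e3 (-(l0 : ℝ) / 2) (((l1 : ℝ) + 1) / 2) (((l2 : ℝ) + 1) / 2) (-(l3 : ℝ) / 2)
        ((l0 + l3 - l1 - l2) / 2 - 1)
    else if l0 + l3 = l1 + l2 then 1
    else
      specP e1 e2 e3 (((l0 : ℝ) + 1) / 2) (-(l1 : ℝ) / 2) (-(l2 : ℝ) / 2) (((l3 : ℝ) + 1) / 2)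
        ((l1 + l2 - l0 - l3) / 2 - 1)
  else
    if l0 + l1 + l2 + 3 ≤ l3 then
      specP e1 e2 e3 (((l0 : ℝ) + 1) / 2) (((l1 : ℝ) + 1) / 2) (((l2 : ℝ) + 1) / 2) (-(l3 : ℝ) / 2)
        ((l3 - l0 - l1 - l2 - 3) / 2)
    else if l3 = l0 + l1 + l2 + 1 then 1
    else
      specP e1 e2 e3 (-(l0 : ℝ) / 2) (-(l1 : ℝ) / 2) (-(l2 : ℝ) / 2) (((l3 : ℝ) + 1) / 2)
        ((l0 + l1 + l2 - l3 - 1) / 2)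

/-- The spectral polynomial `Q^{(l0,l1,l2,l3)}(E) = P⁽⁰⁾P⁽¹⁾P⁽²⁾P⁽³⁾` of the
Treibich-Verdier operator `H^{(l0,l1,l2,l3)}`. -/
noncomputable def specQ (e1 e2 e3 : ℝ) (l0 l1 l2 l3 : ℕ) : Polynomial ℝ :=
  specP0 e1 e2 e3 l0 l1 l2 l3 * specP1 e1 e2 e3 l0 l1 l2 l3 *
    specP2 e1 e2 e3 l0 l1 l2 l3 * specP3 e1 e2 e3 l0 l1 l2 l3

/-!
Put `L = heunOp`, the operator `-H / 4` in the coordinate `X = ℘`. In a basis in which `L` acts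
tridiagonally on polynomials of degree at most `N`, the eigenvalue equation `L y = -(E / 4) y` is a
three-term recurrence in `E`, and each factor of `specQ` is proportional to its truncation
condition. For each factor, either the powers of `X - C e3` or the products
`(X - C e1) ^ m * (X - C e2) ^ (N - m)` make all products of opposite off-diagonal entries positive,
so `L` is similar to a real Jacobi matrix and, by the Christoffel–Darboux identity, the roots are
real and simple. The operators of different factors differ by two reflections `ã_i ↦ 1 / 2 - ã_i`.
If both had polynomial eigenfunctions for the same `E`, Abel's identity would determine their
Wronskian up to a constant, and the half-integral exponents of `L` at the `e_i` are incompatible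
with integral orders of vanishing.
-/

/-- A real polynomial all of whose complex roots are real and simple. -/
def HasSimpleRealRoots (P : ℝ[X]) : Prop :=
  P.Splits ∧ P.Separable

namespace HasSimpleRealRoots

lemma one : HasSimpleRealRoots 1 :=
  ⟨Splits.one, separable_one⟩

lemma C_mul {P : ℝ[X]} (hP : HasSimpleRealRoots P) {c : ℝ} (hc : c ≠ 0) :
    HasSimpleRealRoots (C c * P) :=
  ⟨hP.1.C_mul c, hP.2.unit_mul (isUnit_C.2 hc.isUnit)⟩

lemma mul {P Q : ℝ[X]} (hP : HasSimpleRealRoots P) (hQ : HasSimpleRealRoots Q)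
    (hPQ : IsCoprime P Q) : HasSimpleRealRoots (P * Q) :=
  ⟨hP.1.mul hQ.1, hP.2.mul hQ.2 hPQ⟩

lemma isCoprime {P Q : ℝ[X]} (hP : HasSimpleRealRoots P) (h : ∀ x, P.IsRoot x → ¬ Q.IsRoot x) :
    IsCoprime P Q := by
  refine isCoprime_of_irreducible_dvd (fun hPQ => hP.2.ne_zero hPQ.1) fun f hf hfP hfQ => ?_
  obtain ⟨x, hx⟩ :=
    (hP.1.of_dvd hP.2.ne_zero hfP).exists_eval_eq_zero (degree_pos_of_irreducible hf).ne'
  exact h x (IsRoot.dvd hx hfP) (IsRoot.dvd hx hfQ)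

lemma of_isRoot_imp {P Q : ℝ[X]} (hP : HasSimpleRealRoots P) (hQ : Q ≠ 0)
    (hroot : ∀ x, P.IsRoot x → Q.IsRoot x) (hdeg : Q.natDegree ≤ P.natDegree) :
    HasSimpleRealRoots Q := by
  have hle : P.roots ≤ Q.roots :=
    (Multiset.le_iff_subset (nodup_roots hP.2)).2 fun x hx =>
      (mem_roots hQ).2 (hroot x (isRoot_of_mem_roots hx))
  have hcard : Q.roots.card ≤ P.roots.card :=
    (card_roots' Q).trans (hdeg.trans_eq hP.1.natDegree_eq_card_roots)
  have hroots : P.roots = Q.roots := Multiset.eq_of_le_of_card_le hle hcard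
  have hQs : Q.Splits := splits_iff_card_roots.2 <|
    (card_roots' Q).antisymm (hdeg.trans_eq (hroots ▸ hP.1.natDegree_eq_card_roots))
  exact ⟨hQs, (nodup_roots_iff_of_splits hQ hQs).1 (hroots ▸ nodup_roots hP.2)⟩

lemma roots_map_complex {P : ℝ[X]} (hP : HasSimpleRealRoots P) :
    P.map (algebraMap ℝ ℂ) ≠ 0 ∧ (P.map (algebraMap ℝ ℂ)).roots.Nodup ∧
      ∀ z ∈ (P.map (algebraMap ℝ ℂ)).roots, z.im = 0 := by
  refine ⟨hP.2.map.ne_zero, nodup_roots hP.2.map, fun z hz => ?_⟩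
  rw [hP.1.roots_map] at hz
  obtain ⟨x, -, rfl⟩ := Multiset.mem_map.1 hz
  exact Complex.ofReal_im x

lemma of_complex_roots_real {P : ℝ[X]} (hreal : ∀ z : ℂ, aeval z P = 0 → z.im = 0)
    (hsimple : ∀ x, P.IsRoot x → ¬ (derivative P).IsRoot x) : HasSimpleRealRoots P := by
  have hP : P.Splits := by
    refine Splits.of_splits_map (algebraMap ℝ ℂ) (IsAlgClosed.splits _) fun z hz => ?_
    have him := hreal z (by simpa [eval_map_algebraMap] using isRoot_of_mem_roots hz)
    exact ⟨z.re, Complex.ext (by simp) (by simp [him])⟩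
  have hP0 : P ≠ 0 := by
    rintro rfl
    exact hsimple 0 (by simp) (by simp)
  refine ⟨hP, (nodup_roots_iff_of_splits hP0 hP).1 (Multiset.nodup_iff_count_le_one.2 fun x => ?_)⟩
  rw [count_roots]
  by_contra! hx
  obtain ⟨h₀, h₁⟩ := (one_lt_rootMultiplicity_iff_isRoot hP0).1 hx
  exact hsimple x h₀ h₁

end HasSimpleRealRoots

section ThreeTerm

variable {K : Type*} [Field K]

/-- The polynomials `p₀ = 1, p₁, p₂, …` determined by the three-term recurrence
`A m * p (m + 1) = (s * X + b m) * p m - B (m - 1) * p (m - 1)`, the last term being absent for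
`m = 0`. -/
noncomputable def threeTermPoly (s : K) (A b B : ℕ → K) : ℕ → K[X]
  | 0 => 1
  | 1 => C (A 0)⁻¹ * (C s * X + C (b 0))
  | m + 2 => C (A (m + 1))⁻¹ * ((C s * X + C (b (m + 1))) * threeTermPoly s A b B (m + 1)
      - C (B m) * threeTermPoly s A b B m)

/-- The weights that symmetrize the recurrence of `threeTermPoly`. -/
def threeTermWeight (A B : ℕ → K) (m : ℕ) : K :=
  ∏ i ∈ Finset.range m, A i / B i

variable {s : K} {A b B : ℕ → K}

@[simp] lemma threeTermPoly_zero : threeTermPoly s A b B 0 = 1 := by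
  rw [threeTermPoly]

lemma threeTermPoly_one (hA : A 0 ≠ 0) :
    C (A 0) * threeTermPoly s A b B 1 = C s * X + C (b 0) := by
  rw [threeTermPoly, ← mul_assoc, ← C_mul, mul_inv_cancel₀ hA, C_1, one_mul]

lemma threeTermPoly_add_two {m : ℕ} (hA : A (m + 1) ≠ 0) :
    C (A (m + 1)) * threeTermPoly s A b B (m + 2) =
      (C s * X + C (b (m + 1))) * threeTermPoly s A b B (m + 1)
        - C (B m) * threeTermPoly s A b B m := by
  rw [threeTermPoly, ← mul_assoc, ← C_mul, mul_inv_cancel₀ hA, C_1, one_mul]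

lemma natDegree_threeTermPoly (hs : s ≠ 0) (hA : ∀ m, A m ≠ 0) (n : ℕ) :
    (threeTermPoly s A b B n).natDegree = n := by
  induction n using Nat.twoStepInduction with
  | zero => simp
  | one => rw [threeTermPoly, natDegree_C_mul (inv_ne_zero (hA 0)), natDegree_linear hs]
  | more m ih₀ ih₁ =>
    have hlin : (C s * X + C (b (m + 1))).natDegree = 1 := natDegree_linear hs
    have hmul : ((C s * X + C (b (m + 1))) * threeTermPoly s A b B (m + 1)).natDegree = m + 2 := by
      rw [natDegree_mul (ne_zero_of_natDegree_gt (one_pos.trans_eq hlin.symm))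
        (ne_zero_of_natDegree_gt ((lt_add_one m).trans_eq ih₁.symm)), hlin, ih₁, add_comm]
    rw [threeTermPoly, natDegree_C_mul (inv_ne_zero (hA _)),
      natDegree_sub_eq_left_of_natDegree_lt, hmul]
    rw [hmul]
    exact (natDegree_C_mul_le _ _).trans_lt (by omega)

lemma eq_mul_eval_threeTermPoly (hA : ∀ m, A m ≠ 0) {f : ℕ → K} {x : K}
    (h₀ : A 0 * f 1 = (s * x + b 0) * f 0)
    (h : ∀ m, A (m + 1) * f (m + 2) = (s * x + b (m + 1)) * f (m + 1) - B m * f m) (n : ℕ) :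
    f n = f 0 * (threeTermPoly s A b B n).eval x := by
  induction n using Nat.twoStepInduction with
  | zero => simp
  | one =>
    refine mul_left_cancel₀ (hA 0) ?_
    have hp := congrArg (eval x) (threeTermPoly_one (s := s) (b := b) (B := B) (hA 0))
    simp only [eval_mul, eval_add, eval_C, eval_X] at hp
    linear_combination h₀ - f 0 * hp
  | more m ih₀ ih₁ =>
    refine mul_left_cancel₀ (hA (m + 1)) ?_
    have hp := congrArg (eval x) (threeTermPoly_add_two (s := s) (b := b) (B := B) (hA (m + 1)))
    simp only [eval_mul, eval_add, eval_sub, eval_C, eval_X] at hp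
    linear_combination h m + (s * x + b (m + 1)) * ih₁ - B m * ih₀ - f 0 * hp

lemma threeTermWeight_succ_mul {m : ℕ} (hB : B m ≠ 0) :
    threeTermWeight A B (m + 1) * B m = threeTermWeight A B m * A m := by
  rw [threeTermWeight, Finset.prod_range_succ, ← threeTermWeight, mul_assoc, div_mul_cancel₀ _ hB]

lemma christoffel_darboux {S : Type*} [CommRing S] [Algebra K S] (x y : S) (hA : ∀ m, A m ≠ 0)
    {n : ℕ} (hB : ∀ m < n, B m ≠ 0) :
    algebraMap K S s * (x - y) * ∑ m ∈ Finset.range (n + 1),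
        algebraMap K S (threeTermWeight A B m) *
          (aeval x (threeTermPoly s A b B m) * aeval y (threeTermPoly s A b B m)) =
      algebraMap K S (threeTermWeight A B n * A n) *
        (aeval x (threeTermPoly s A b B (n + 1)) * aeval y (threeTermPoly s A b B n)
          - aeval x (threeTermPoly s A b B n) * aeval y (threeTermPoly s A b B (n + 1))) := by
  induction n with
  | zero =>
    have hp (z : S) := congrArg (aeval z) (threeTermPoly_one (s := s) (b := b) (B := B) (hA 0))
    simp only [map_mul, map_add, aeval_C, aeval_X] at hp
    simp only [threeTermWeight, zero_add, Finset.sum_range_one, Finset.prod_range_zero,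
      threeTermPoly_zero, map_one, one_mul, mul_one]
    linear_combination hp y - hp x
  | succ n ih =>
    have hp (z : S) :=
      congrArg (aeval z) (threeTermPoly_add_two (s := s) (b := b) (B := B) (hA (n + 1)))
    have hw := congrArg (algebraMap K S) (threeTermWeight_succ_mul (A := A) (hB n n.lt_succ_self))
    simp only [map_mul, map_add, map_sub, aeval_C, aeval_X] at hp hw
    rw [Finset.sum_range_succ, mul_add, ih fun m hm => hB m (hm.trans n.lt_succ_self)]
    simp only [map_mul]
    set p := threeTermPoly s A b B
    linear_combination algebraMap K S (threeTermWeight A B (n + 1)) *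
        (aeval x (p (n + 1)) * hp y - aeval y (p (n + 1)) * hp x)
      - (aeval x (p (n + 1)) * aeval y (p n) - aeval x (p n) * aeval y (p (n + 1))) * hw

lemma christoffel_darboux_confluent (x : K) (hA : ∀ m, A m ≠ 0) {n : ℕ}
    (hB : ∀ m < n, B m ≠ 0) :
    s * ∑ m ∈ Finset.range (n + 1),
        threeTermWeight A B m * (threeTermPoly s A b B m).eval x ^ 2 =
      threeTermWeight A B n * A n *
        ((derivative (threeTermPoly s A b B (n + 1))).eval x * (threeTermPoly s A b B n).eval x
          - (derivative (threeTermPoly s A b B n)).eval x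
            * (threeTermPoly s A b B (n + 1)).eval x) := by
  have haeval (p : K[X]) : aeval (C x) p = C (p.eval x) := aeval_algebraMap_apply K[X] x p
  have h := congrArg (fun q => (derivative q).eval x)
    (christoffel_darboux (s := s) (b := b) (X : K[X]) (C x) hA hB)
  simp only [haeval, aeval_X_left_apply] at h
  simpa [← C_eq_algebraMap, pow_two, eval_finsetSum] using h

end ThreeTerm

section RealThreeTerm

variable {s : ℝ} {A b B : ℕ → ℝ} {N : ℕ}

lemma threeTermWeight_pos (hAB : ∀ m < N, 0 < A m * B m) {m : ℕ} (hm : m ≤ N) :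
    0 < threeTermWeight A B m :=
  Finset.prod_pos fun i hi =>
    div_pos_iff.2 (mul_pos_iff.1 (hAB i ((Finset.mem_range.1 hi).trans_le hm)))

lemma sum_threeTermWeight_mul_pos (hAB : ∀ m < N, 0 < A m * B m) {v : ℕ → ℝ} (hv₀ : 0 < v 0)
    (hv : ∀ m, 0 ≤ v m) : 0 < ∑ m ∈ Finset.range (N + 1), threeTermWeight A B m * v m :=
  Finset.sum_pos'
    (fun m hm => mul_nonneg
      (threeTermWeight_pos hAB (Nat.lt_succ_iff.1 (Finset.mem_range.1 hm))).le (hv m))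
    ⟨0, Finset.mem_range.2 N.succ_pos, mul_pos (threeTermWeight_pos hAB N.zero_le) hv₀⟩

lemma im_eq_zero_of_aeval_threeTermPoly_eq_zero (hs : s ≠ 0) (hA : ∀ m, A m ≠ 0)
    (hAB : ∀ m < N, 0 < A m * B m) {z : ℂ}
    (hz : aeval z (threeTermPoly s A b B (N + 1)) = 0) : z.im = 0 := by
  have hconj (p : ℝ[X]) : aeval (starRingEnd ℂ z) p = starRingEnd ℂ (aeval z p) :=
    aeval_algHom_apply Complex.conjAe.toAlgHom z p
  have hcd := christoffel_darboux (s := s) (b := b) z (starRingEnd ℂ z) hA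
    fun m hm => right_ne_zero_of_mul (hAB m hm).ne'
  simp only [hconj, hz, map_zero, mul_zero, zero_mul, sub_zero, Complex.mul_conj,
    Complex.coe_algebraMap, ← Complex.ofReal_mul, ← Complex.ofReal_sum, mul_eq_zero,
    Complex.ofReal_eq_zero, hs, false_or, sub_eq_zero] at hcd
  refine Complex.conj_eq_iff_im.1 (hcd.resolve_right ?_).symm
  exact (sum_threeTermWeight_mul_pos hAB (by simp) fun m => Complex.normSq_nonneg _).ne'

lemma not_isRoot_derivative_threeTermPoly (hs : s ≠ 0) (hA : ∀ m, A m ≠ 0)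
    (hAB : ∀ m < N, 0 < A m * B m) {x : ℝ} (hx : (threeTermPoly s A b B (N + 1)).IsRoot x) :
    ¬ (derivative (threeTermPoly s A b B (N + 1))).IsRoot x := by
  intro hx'
  have hcd := christoffel_darboux_confluent (s := s) (b := b) x hA
    fun m hm => right_ne_zero_of_mul (hAB m hm).ne'
  rw [hx.eq_zero, hx'.eq_zero, zero_mul, mul_zero, sub_zero, mul_zero] at hcd
  exact mul_ne_zero hs
    (sum_threeTermWeight_mul_pos hAB (by simp) fun m => sq_nonneg _).ne' hcd

theorem hasSimpleRealRoots_threeTermPoly (hs : s ≠ 0) (hA : ∀ m, A m ≠ 0)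
    (hAB : ∀ m < N, 0 < A m * B m) : HasSimpleRealRoots (threeTermPoly s A b B (N + 1)) :=
  .of_complex_roots_real (fun _ => im_eq_zero_of_aeval_threeTermPoly_eq_zero hs hA hAB)
    fun _ => not_isRoot_derivative_threeTermPoly hs hA hAB

end RealThreeTerm

section Tridiagonal

lemma linearMap_ext_X_sub_C_pow {R M : Type*} [CommRing R] [AddCommGroup M] [Module R M] (e : R)
    {f g : R[X] →ₗ[R] M} (h : ∀ k : ℕ, f ((X - C e) ^ k) = g ((X - C e) ^ k)) : f = g := by
  have hcomp : f ∘ₗ taylor (-e) = g ∘ₗ taylor (-e) :=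
    lhom_ext' fun k => LinearMap.ext_ring <| by simpa [sub_eq_add_neg] using h k
  refine LinearMap.ext fun p => ?_
  simpa [taylor_taylor] using LinearMap.congr_fun hcomp (taylor e p)

variable {K V : Type*} [Field K] [AddCommGroup V] [Module K V]

/-- `L` acts on `φ 0, …, φ n` by a tridiagonal matrix, whose entries are named and signed so that
the coefficients of an eigenvector for `s * x` are the values at `x` of `threeTermPoly s A b B`. -/
structure ActsTridiagonally (L : Module.End K V) (φ : ℕ → V) (A b B : ℕ → K) (n : ℕ) : Prop where
  apply_zero : L (φ 0) = -(b 0 • φ 0) + B 0 • φ 1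
  apply_succ : ∀ m < n, L (φ (m + 1)) = A m • φ m - b (m + 1) • φ (m + 1) + B (m + 1) • φ (m + 2)

namespace ActsTridiagonally

variable {L : Module.End K V} {φ : ℕ → V} {s : K} {A b B : ℕ → K} {n : ℕ}

lemma apply_sum (hL : ActsTridiagonally L φ A b B n) (hA : ∀ m, A m ≠ 0) (x : K) :
    L (∑ m ∈ Finset.range (n + 1), (threeTermPoly s A b B m).eval x • φ m) =
      (s * x) • ∑ m ∈ Finset.range (n + 1), (threeTermPoly s A b B m).eval x • φ m
        - (A n * (threeTermPoly s A b B (n + 1)).eval x) • φ n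
        + (B n * (threeTermPoly s A b B n).eval x) • φ (n + 1) := by
  induction n with
  | zero =>
    have hp := congrArg (eval x) (threeTermPoly_one (s := s) (b := b) (B := B) (hA 0))
    simp only [eval_mul, eval_add, eval_C, eval_X] at hp
    simp only [zero_add, Finset.sum_range_one, threeTermPoly_zero, eval_one, one_smul, mul_one,
      hL.apply_zero, hp]
    module
  | succ n ih =>
    have hp := congrArg (eval x) (threeTermPoly_add_two (s := s) (b := b) (B := B) (hA (n + 1)))
    simp only [eval_mul, eval_add, eval_sub, eval_C, eval_X] at hp
    rw [Finset.sum_range_succ, map_add, map_smul, hL.apply_succ n n.lt_succ_self, hp,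
      ih ⟨hL.apply_zero, fun m hm => hL.apply_succ m (hm.trans n.lt_succ_self)⟩]
    module

lemma exists_hasEigenvector (hL : ActsTridiagonally L φ A b B n) (hA : ∀ m, A m ≠ 0)
    (hB : B n = 0) {U : Submodule K V} (hU : ∀ m ≤ n, φ m ∈ U) (ℓ : V →ₗ[K] K)
    (hℓ₀ : ℓ (φ 0) ≠ 0) (hℓ : ∀ m, ℓ (φ (m + 1)) = 0) {x : K}
    (hx : (threeTermPoly s A b B (n + 1)).IsRoot x) : ∃ v ∈ U, L.HasEigenvector (s * x) v := by
  refine ⟨∑ m ∈ Finset.range (n + 1), (threeTermPoly s A b B m).eval x • φ m,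
    sum_mem fun m hm => U.smul_mem _ (hU m (Nat.lt_succ_iff.1 (Finset.mem_range.1 hm))),
    Module.End.mem_eigenspace_iff.2 ?_, fun h => hℓ₀ ?_⟩
  · rw [hL.apply_sum hA, hx.eq_zero, hB, mul_zero, zero_mul, zero_smul, zero_smul, sub_zero,
      add_zero]
  · simpa [Finset.sum_range_succ', hℓ] using congrArg ℓ h

variable {L : Module.End K K[X]} {e : K}

lemma coeff_zero_taylor_apply (hL : ∀ n, ActsTridiagonally L (fun m => (X - C e) ^ m) A b B n)
    (y : K[X]) :
    (taylor e (L y)).coeff 0 = A 0 * (taylor e y).coeff 1 - b 0 * (taylor e y).coeff 0 := by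
  have h : lcoeff K 0 ∘ₗ taylor e ∘ₗ L =
      (A 0 • lcoeff K 1 - b 0 • lcoeff K 0) ∘ₗ taylor e := by
    refine linearMap_ext_X_sub_C_pow e fun k => ?_
    rcases k with _ | _ | k
    · have h₀ : L 1 = _ := (hL 0).apply_zero
      simp [h₀, coeff_X, coeff_one]
    all_goals
      rw [LinearMap.comp_apply, LinearMap.comp_apply, (hL _).apply_succ _ (Nat.lt_succ_self _)]
      simp [coeff_X_pow, coeff_one]
  exact LinearMap.congr_fun h y

lemma coeff_succ_taylor_apply (hL : ∀ n, ActsTridiagonally L (fun m => (X - C e) ^ m) A b B n)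
    (y : K[X]) (m : ℕ) :
    (taylor e (L y)).coeff (m + 1) = A (m + 1) * (taylor e y).coeff (m + 2)
      - b (m + 1) * (taylor e y).coeff (m + 1) + B m * (taylor e y).coeff m := by
  have h : lcoeff K (m + 1) ∘ₗ taylor e ∘ₗ L =
      (A (m + 1) • lcoeff K (m + 2) - b (m + 1) • lcoeff K (m + 1) + B m • lcoeff K m)
        ∘ₗ taylor e := by
    refine linearMap_ext_X_sub_C_pow e fun k => ?_
    cases k with
    | zero =>
      have h₀ : L 1 = _ := (hL 0).apply_zero
      cases m <;> simp [h₀, coeff_X, coeff_one]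
    | succ k =>
      rw [LinearMap.comp_apply, LinearMap.comp_apply, (hL _).apply_succ _ k.lt_succ_self]
      simp only [map_add, map_sub, map_smul, taylor_pow, taylor_X, taylor_C,
        add_sub_cancel_right, lcoeff_apply, coeff_X_pow,
        smul_eq_mul, mul_ite, mul_one, mul_zero, Nat.add_right_cancel_iff, LinearMap.comp_apply,
        LinearMap.add_apply, LinearMap.sub_apply, LinearMap.smul_apply, Nat.reduceEqDiff]
      split_ifs <;> subst_vars <;> first | omega | rfl
  exact LinearMap.congr_fun h y

lemma isRoot_of_hasEigenvector (hL : ∀ n, ActsTridiagonally L (fun m => (X - C e) ^ m) A b B n)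
    (hA : ∀ m, A m ≠ 0) {x : K} {y : K[X]} (hy : L.HasEigenvector (s * x) y)
    (hn : y.natDegree ≤ n) : (threeTermPoly s A b B (n + 1)).IsRoot x := by
  have hcoeff : ∀ m, (taylor e y).coeff m =
      (taylor e y).coeff 0 * (threeTermPoly s A b B m).eval x := by
    refine eq_mul_eval_threeTermPoly hA ?_ fun m => ?_
    · have h := coeff_zero_taylor_apply hL y
      rw [hy.apply_eq_smul, map_smul, coeff_smul, smul_eq_mul] at h
      linear_combination -h
    · have h := coeff_succ_taylor_apply hL y m
      rw [hy.apply_eq_smul, map_smul, coeff_smul, smul_eq_mul] at h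
      linear_combination -h
  have hlast := hcoeff (n + 1)
  rw [coeff_eq_zero_of_natDegree_lt (by rw [natDegree_taylor]; omega)] at hlast
  refine (mul_eq_zero.1 hlast.symm).resolve_left fun h₀ => hy.2 ?_
  exact (taylor_eq_zero e y).1 (ext fun m => by rw [hcoeff, h₀, zero_mul, coeff_zero])

end ActsTridiagonally

end Tridiagonal

section HeunOperator

variable (e1 e2 e3 a0 a1 a2 a3 : ℝ)

/-- The constant term of `heunQE` as a polynomial in `E`. -/
noncomputable def heunAccessory : ℝ :=
  e1 * (a2 + a3) ^ 2 + e2 * (a1 + a3) ^ 2 + e3 * (a1 + a2) ^ 2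
    - e3 * ((a0 + a1 + a2 + a3) * (-a0 + 1 / 2 + a1 + a2 + a3))

/-- The algebraic form of the Treibich–Verdier operator `H`, divided by `-4`: the differential
operator on polynomials in `X = ℘` to which `-H / 4` is conjugate after factoring out
`∏ (X - e_i) ^ ã_i`. -/
noncomputable def heunOp : Module.End ℝ ℝ[X] :=
  LinearMap.mulLeft ℝ ((X - C e1) * (X - C e2) * (X - C e3)) ∘ₗ derivative ∘ₗ derivative
    + LinearMap.mulLeft ℝ (C (2 * a1 + 1 / 2) * (X - C e2) * (X - C e3)
        + C (2 * a2 + 1 / 2) * (X - C e1) * (X - C e3)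
        + C (2 * a3 + 1 / 2) * (X - C e1) * (X - C e2)) ∘ₗ derivative
    + LinearMap.mulLeft ℝ
        (C ((a0 + a1 + a2 + a3) * (-a0 + 1 / 2 + a1 + a2 + a3)) * (X - C e3)
          - C (heunAccessory e1 e2 e3 a0 a1 a2 a3))

lemma heunOp_apply (y : ℝ[X]) :
    heunOp e1 e2 e3 a0 a1 a2 a3 y =
      (X - C e1) * (X - C e2) * (X - C e3) * derivative (derivative y)
        + (C (2 * a1 + 1 / 2) * (X - C e2) * (X - C e3)
            + C (2 * a2 + 1 / 2) * (X - C e1) * (X - C e3)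
            + C (2 * a3 + 1 / 2) * (X - C e1) * (X - C e2)) * derivative y
        + (C ((a0 + a1 + a2 + a3) * (-a0 + 1 / 2 + a1 + a2 + a3)) * (X - C e3)
            - C (heunAccessory e1 e2 e3 a0 a1 a2 a3)) * y :=
  rfl

lemma heunOp_swap₁₂ : heunOp e2 e1 e3 a0 a2 a1 a3 = heunOp e1 e2 e3 a0 a1 a2 a3 := by
  refine LinearMap.ext fun y => Polynomial.funext fun x => ?_
  simp only [heunOp_apply, heunAccessory, eval_add, eval_mul, eval_sub, eval_C, eval_X]
  ring

lemma heunOp_swap₁₃ : heunOp e3 e2 e1 a0 a3 a2 a1 = heunOp e1 e2 e3 a0 a1 a2 a3 := by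
  refine LinearMap.ext fun y => Polynomial.funext fun x => ?_
  simp only [heunOp_apply, heunAccessory, eval_add, eval_mul, eval_sub, eval_C, eval_X]
  ring

/-- The entries of `heunOp` in the basis `(X - C e3) ^ m` that lower the exponent. -/
noncomputable def heunLower (m : ℕ) : ℝ :=
  (e1 - e3) * (e2 - e3) * (m + 1) * (m + (2 * a3 + 1 / 2))

/-- The negated diagonal entries of `heunOp` in the basis `(X - C e3) ^ m`. -/
noncomputable def heunDiag (m : ℕ) : ℝ :=
  m * ((m - 1 + (2 * a3 + 1 / 2)) * (e1 + e2 - 2 * e3)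
    + (e2 - e3) * (2 * a1 + 1 / 2) + (e1 - e3) * (2 * a2 + 1 / 2))
    + heunAccessory e1 e2 e3 a0 a1 a2 a3

/-- The entries of `heunOp` in the basis `(X - C e3) ^ m` that raise the exponent. -/
noncomputable def heunRaise (m : ℕ) : ℝ :=
  (m + (a0 + a1 + a2 + a3)) * (m + (-a0 + 1 / 2 + a1 + a2 + a3))

/-- The entries of `heunOp` in the basis `(X - C e1) ^ m * (X - C e2) ^ (N - m)` that lower `m`. -/
noncomputable def heunLower' (m : ℕ) : ℝ :=
  (e1 - e3) * (m + 1) * (m + (2 * a1 + 1 / 2))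

/-- The negated diagonal entries of `heunOp` in the basis
`(X - C e1) ^ m * (X - C e2) ^ (N - m)`. -/
noncomputable def heunDiag' (N m : ℕ) : ℝ :=
  heunAccessory e1 e2 e3 a0 a1 a2 a3 - ((e1 - e2) * m * (m - 1 + (2 * a1 + 1 / 2))
    + (e1 - e3) * (2 * m * (N - m) + (2 * a1 + 1 / 2) * (N - m) + (2 * a2 + 1 / 2) * m
      + (a0 + a1 + a2 + a3) * (-a0 + 1 / 2 + a1 + a2 + a3))
    + (e1 - e2) * (2 * a3 + 1 / 2) * m)

/-- The entries of `heunOp` in the basis `(X - C e1) ^ m * (X - C e2) ^ (N - m)` that raise `m`. -/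
noncomputable def heunRaise' (N m : ℕ) : ℝ :=
  -((e3 - e2) * (N - m) * (N - m - 1 + (2 * a2 + 1 / 2)))

lemma X_sub_C_mul_derivative_pow (e : ℝ) (m : ℕ) :
    (X - C e) * derivative ((X - C e) ^ m) = C (m : ℝ) * (X - C e) ^ m := by
  cases m with
  | zero => simp
  | succ m => rw [derivative_X_sub_C_pow, Nat.add_sub_cancel, mul_left_comm, pow_succ']

lemma X_sub_C_sq_mul_derivative_derivative_pow (e : ℝ) (m : ℕ) :
    (X - C e) ^ 2 * derivative (derivative ((X - C e) ^ m)) =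
      C (m * (m - 1) : ℝ) * (X - C e) ^ m := by
  have h₁ := X_sub_C_mul_derivative_pow e m
  have h₂ := congrArg derivative h₁
  simp only [derivative_mul, derivative_sub, derivative_X, derivative_C, sub_zero, one_mul,
    zero_mul, zero_add] at h₂
  rw [C_mul, C_sub, C_1]
  linear_combination (X - C e) * h₂ + (C (m : ℝ) - 1) * h₁

lemma X_sub_C_mul_heunOp_pow (m : ℕ) :
    (X - C e3) * heunOp e1 e2 e3 a0 a1 a2 a3 ((X - C e3) ^ m) =
      (X - C e3) ^ m * (C ((e1 - e3) * (e2 - e3) * m * (m - 1 + (2 * a3 + 1 / 2)))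
        - C (heunDiag e1 e2 e3 a0 a1 a2 a3 m) * (X - C e3)
        + C (heunRaise a0 a1 a2 a3 m) * (X - C e3) ^ 2) := by
  have h₁ := X_sub_C_mul_derivative_pow e3 m
  have h₂ := X_sub_C_sq_mul_derivative_derivative_pow e3 m
  refine Polynomial.funext fun x => ?_
  have h₁ := congrArg (eval x) h₁
  have h₂ := congrArg (eval x) h₂
  simp only [heunOp_apply, heunDiag, heunRaise, eval_mul, eval_add, eval_sub, eval_pow, eval_X,
    eval_C] at h₁ h₂ ⊢
  linear_combination (x - e1) * (x - e2) * h₂ + ((2 * a1 + 1 / 2) * (x - e2) * (x - e3)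
    + (2 * a2 + 1 / 2) * (x - e1) * (x - e3) + (2 * a3 + 1 / 2) * (x - e1) * (x - e2)) * h₁

lemma actsTridiagonally_heunOp (n : ℕ) :
    ActsTridiagonally (heunOp e1 e2 e3 a0 a1 a2 a3) (fun m => (X - C e3) ^ m)
      (heunLower e1 e2 e3 a3) (heunDiag e1 e2 e3 a0 a1 a2 a3) (heunRaise a0 a1 a2 a3) n := by
  constructor
  · refine mul_left_cancel₀ (X_sub_C_ne_zero e3) ?_
    rw [X_sub_C_mul_heunOp_pow]
    simp only [Nat.cast_zero, mul_zero, zero_mul, C_0, smul_eq_C_mul]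
    ring
  · intro m _
    refine mul_left_cancel₀ (X_sub_C_ne_zero e3) ?_
    rw [X_sub_C_mul_heunOp_pow]
    simp only [heunLower, Nat.cast_add, Nat.cast_one, add_sub_cancel_right, smul_eq_C_mul]
    ring

variable {a0 a1 a2 a3} in
lemma X_sub_C_mul_X_sub_C_mul_heunOp_pow_mul_pow {i j : ℕ}
    (hα : a0 + a1 + a2 + a3 = -((i : ℝ) + j)) :
    (X - C e1) * (X - C e2) *
        heunOp e1 e2 e3 a0 a1 a2 a3 ((X - C e1) ^ i * (X - C e2) ^ j) =
      (X - C e1) ^ i * (X - C e2) ^ j *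
        (C ((e1 - e3) * i * (i - 1 + (2 * a1 + 1 / 2))) * (X - C e2) ^ 2
          - C (heunDiag' e1 e2 e3 a0 a1 a2 a3 (i + j) i) * ((X - C e1) * (X - C e2))
          + C (heunRaise' e2 e3 a2 (i + j) i) * (X - C e1) ^ 2) := by
  refine Polynomial.funext fun x => ?_
  have h₁ := congrArg (eval x) (X_sub_C_mul_derivative_pow e1 i)
  have h₂ := congrArg (eval x) (X_sub_C_sq_mul_derivative_derivative_pow e1 i)
  have k₁ := congrArg (eval x) (X_sub_C_mul_derivative_pow e2 j)
  have k₂ := congrArg (eval x) (X_sub_C_sq_mul_derivative_derivative_pow e2 j)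
  obtain rfl : a0 = -((i : ℝ) + j) - a1 - a2 - a3 := by linear_combination hα
  simp only [heunOp_apply, heunDiag', heunRaise', derivative_mul, derivative_add, eval_mul,
    eval_add, eval_sub, eval_pow, eval_X, eval_C, Nat.cast_add] at h₁ h₂ k₁ k₂ ⊢
  linear_combination (x - e3) * (x - e2) ^ 2 * (x - e2) ^ j * h₂
    + (x - e3) * (x - e1) ^ 2 * (x - e1) ^ i * k₂
    + 2 * (x - e3) * (x - e1) * (x - e2) *
      ((x - e2) * eval x (derivative ((X - C e2) ^ j)) * h₁ + i * (x - e1) ^ i * k₁)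
    + ((2 * a1 + 1 / 2) * (x - e2) * (x - e3) + (2 * a2 + 1 / 2) * (x - e1) * (x - e3)
      + (2 * a3 + 1 / 2) * (x - e1) * (x - e2)) *
        ((x - e2) * (x - e2) ^ j * h₁ + (x - e1) * (x - e1) ^ i * k₁)

lemma X_sub_C_mul_heunRaise'_smul {N m : ℕ} (hm : m ≤ N) :
    (X - C e2) * (heunRaise' e2 e3 a2 N m • ((X - C e1) ^ (m + 1) * (X - C e2) ^ (N - (m + 1)))) =
      (X - C e1) * (heunRaise' e2 e3 a2 N m • ((X - C e1) ^ m * (X - C e2) ^ (N - m))) := by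
  obtain rfl | hm := hm.eq_or_lt
  · simp [heunRaise']
  · obtain ⟨k, rfl⟩ := Nat.exists_eq_add_of_lt hm
    rw [show m + k + 1 - (m + 1) = k by omega, show m + k + 1 - m = k + 1 by omega]
    simp only [smul_eq_C_mul]
    ring

variable {a0 a1 a2 a3} in
lemma actsTridiagonally_heunOp' {N : ℕ} (hα : a0 + a1 + a2 + a3 = -(N : ℝ)) :
    ActsTridiagonally (heunOp e1 e2 e3 a0 a1 a2 a3)
      (fun m => (X - C e1) ^ m * (X - C e2) ^ (N - m)) (heunLower' e1 e3 a1)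
      (heunDiag' e1 e2 e3 a0 a1 a2 a3 N) (heunRaise' e2 e3 a2 N) N := by
  have hne : (X - C e1) * (X - C e2) ≠ 0 := mul_ne_zero (X_sub_C_ne_zero e1) (X_sub_C_ne_zero e2)
  constructor
  · refine mul_left_cancel₀ hne ?_
    have hraise := X_sub_C_mul_heunRaise'_smul e1 e2 e3 a2 N.zero_le
    simp only [Nat.sub_zero]
    rw [X_sub_C_mul_X_sub_C_mul_heunOp_pow_mul_pow e1 e2 e3 (by rw [hα]; simp)]
    simp only [Nat.cast_zero, mul_zero, zero_mul, C_0, zero_add, Nat.sub_zero, smul_eq_C_mul]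
      at hraise ⊢
    linear_combination -(X - C e1) * hraise
  · intro m hm
    obtain ⟨k, rfl⟩ := Nat.exists_eq_add_of_lt hm
    refine mul_left_cancel₀ hne ?_
    have hraise := X_sub_C_mul_heunRaise'_smul e1 e2 e3 a2 (N := m + k + 1) (m := m + 1) (by omega)
    have hk : m + k + 1 - (m + 1) = k := by omega
    simp only [hk] at hraise ⊢
    rw [X_sub_C_mul_X_sub_C_mul_heunOp_pow_mul_pow e1 e2 e3 (by rw [hα]; push_cast; ring),
      show m + k + 1 - m = k + 1 by omega, show m + 1 + k = m + k + 1 by omega]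
    simp only [heunLower', Nat.cast_add, Nat.cast_one, add_sub_cancel_right, smul_eq_C_mul]
      at hraise ⊢
    linear_combination -(X - C e1) * hraise

lemma heunC_eq_threeTermPoly (n : ℕ) :
    heunC e1 e2 e3 a0 a1 a2 a3 n =
      threeTermPoly (-(1 / 4)) (heunLower e1 e2 e3 a3) (heunDiag e1 e2 e3 a0 a1 a2 a3)
        (heunRaise a0 a1 a2 a3) n := by
  induction n using Nat.twoStepInduction with
  | zero => rw [heunC, threeTermPoly]
  | one =>
    refine Polynomial.funext fun E => ?_
    simp only [heunC, heunQE, threeTermPoly, heunLower, heunDiag, heunAccessory, eval_mul, eval_sub,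
      eval_add, eval_C, eval_X, Nat.cast_zero]
    ring
  | more m ih₀ ih₁ =>
    refine Polynomial.funext fun E => ?_
    simp only [heunC, heunQE, threeTermPoly, heunLower, heunDiag, heunRaise, heunAccessory, ih₀,
      ih₁, eval_mul, eval_sub, eval_add, eval_C, eval_X, Nat.cast_add, Nat.cast_one, add_assoc,
      one_add_one_eq_two]
    ring

variable {e1 e2 e3 a0 a1 a2 a3} {N : ℕ}

lemma heunLower_ne_zero (h13 : e1 ≠ e3) (h23 : e2 ≠ e3) (hγ3 : ∀ n : ℤ, 2 * a3 + 1 / 2 ≠ n)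
    (m : ℕ) : heunLower e1 e2 e3 a3 m ≠ 0 := by
  refine mul_ne_zero (mul_ne_zero (mul_ne_zero (sub_ne_zero.2 h13) (sub_ne_zero.2 h23))
    m.cast_add_one_ne_zero) fun h => hγ3 (-m) ?_
  push_cast
  linear_combination h

lemma heunLower'_ne_zero (h13 : e1 ≠ e3) (hγ1 : ∀ n : ℤ, 2 * a1 + 1 / 2 ≠ n) (m : ℕ) :
    heunLower' e1 e3 a1 m ≠ 0 := by
  refine mul_ne_zero (mul_ne_zero (sub_ne_zero.2 h13) m.cast_add_one_ne_zero) fun h => hγ1 (-m) ?_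
  push_cast
  linear_combination h

lemma natDegree_heunC (h13 : e1 ≠ e3) (h23 : e2 ≠ e3) (hγ3 : ∀ n : ℤ, 2 * a3 + 1 / 2 ≠ n)
    (n : ℕ) : (heunC e1 e2 e3 a0 a1 a2 a3 n).natDegree = n := by
  rw [heunC_eq_threeTermPoly]
  exact natDegree_threeTermPoly (by norm_num) (heunLower_ne_zero h13 h23 hγ3) n

lemma heunC_succ_ne_zero (h13 : e1 ≠ e3) (h23 : e2 ≠ e3) (hγ3 : ∀ n : ℤ, 2 * a3 + 1 / 2 ≠ n)
    (n : ℕ) : heunC e1 e2 e3 a0 a1 a2 a3 (n + 1) ≠ 0 :=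
  ne_zero_of_natDegree_gt ((lt_add_one n).trans_eq (natDegree_heunC h13 h23 hγ3 (n + 1)).symm)

theorem isRoot_heunC_iff (hα : a0 + a1 + a2 + a3 = -(N : ℝ)) (h13 : e1 ≠ e3) (h23 : e2 ≠ e3)
    (hγ3 : ∀ n : ℤ, 2 * a3 + 1 / 2 ≠ n) {E : ℝ} :
    (heunC e1 e2 e3 a0 a1 a2 a3 (N + 1)).IsRoot E ↔
      ∃ y ∈ degreeLE ℝ N, (heunOp e1 e2 e3 a0 a1 a2 a3).HasEigenvector (-(1 / 4) * E) y := by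
  have hL := actsTridiagonally_heunOp e1 e2 e3 a0 a1 a2 a3
  have hA := heunLower_ne_zero h13 h23 hγ3
  rw [heunC_eq_threeTermPoly]
  constructor
  · refine (hL N).exists_hasEigenvector hA (by rw [heunRaise, hα]; ring) (fun m hm => ?_)
      (leval e3) (by simp) (by simp)
    rwa [mem_degreeLE, ← natDegree_le_iff_degree_le, natDegree_pow, natDegree_X_sub_C, mul_one]
  · rintro ⟨y, hyN, hy⟩
    exact ActsTridiagonally.isRoot_of_hasEigenvector hL hA hy
      (natDegree_le_iff_degree_le.2 (mem_degreeLE.1 hyN))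

lemma hasSimpleRealRoots_heunC (h13 : e3 < e1) (h32 : e2 < e3)
    (hγ3 : ∀ n : ℤ, 2 * a3 + 1 / 2 ≠ n)
    (hα : a0 + a1 + a2 + a3 = -(N : ℝ))
    (hsign : ∀ m < N, (0 : ℝ) < (m + (2 * a3 + 1 / 2)) * (m + (-a0 + 1 / 2 + a1 + a2 + a3))) :
    HasSimpleRealRoots (heunC e1 e2 e3 a0 a1 a2 a3 (N + 1)) := by
  rw [heunC_eq_threeTermPoly]
  refine hasSimpleRealRoots_threeTermPoly (by norm_num) (heunLower_ne_zero h13.ne' h32.ne hγ3)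
    fun m hm => ?_
  have hmN : (0 : ℝ) < N - m := sub_pos.2 (Nat.cast_lt.2 hm)
  have hpos : 0 < (e1 - e3) * (e3 - e2) * (m + 1) * (N - m) :=
    mul_pos (mul_pos (mul_pos (sub_pos.2 h13) (sub_pos.2 h32)) m.cast_add_one_pos) hmN
  rw [heunLower, heunRaise, hα]
  linear_combination mul_pos hpos (hsign m hm)

lemma hasSimpleRealRoots_heunC' (h13 : e3 < e1) (h32 : e2 < e3)
    (hγ1 : ∀ n : ℤ, 2 * a1 + 1 / 2 ≠ n) (hγ3 : ∀ n : ℤ, 2 * a3 + 1 / 2 ≠ n)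
    (hα : a0 + a1 + a2 + a3 = -(N : ℝ))
    (hsign : ∀ m < N, (0 : ℝ) < (m + (2 * a1 + 1 / 2)) * (m + 1 - N - (2 * a2 + 1 / 2))) :
    HasSimpleRealRoots (heunC e1 e2 e3 a0 a1 a2 a3 (N + 1)) := by
  have hL := actsTridiagonally_heunOp' e1 e2 e3 hα
  have hA := heunLower'_ne_zero h13.ne' hγ1
  have hdeg := natDegree_heunC (a0 := a0) (a1 := a1) (a2 := a2) h13.ne' h32.ne hγ3 (N + 1)
  have hs : (-(1 / 4) : ℝ) ≠ 0 := by norm_num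
  have hroots : HasSimpleRealRoots (threeTermPoly (-(1 / 4)) (heunLower' e1 e3 a1)
      (heunDiag' e1 e2 e3 a0 a1 a2 a3 N) (heunRaise' e2 e3 a2 N) (N + 1)) := by
    refine hasSimpleRealRoots_threeTermPoly hs hA fun m hm => ?_
    have hmN : (0 : ℝ) < N - m := sub_pos.2 (Nat.cast_lt.2 hm)
    have hpos : 0 < (e1 - e3) * (e3 - e2) * (m + 1) * (N - m) :=
      mul_pos (mul_pos (mul_pos (sub_pos.2 h13) (sub_pos.2 h32)) m.cast_add_one_pos) hmN
    rw [heunLower', heunRaise']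
    linear_combination mul_pos hpos (hsign m hm)
  refine hroots.of_isRoot_imp (heunC_succ_ne_zero h13.ne' h32.ne hγ3 N) (fun E hE => ?_)
    (hdeg.trans_le (natDegree_threeTermPoly hs hA (N + 1)).ge)
  rw [isRoot_heunC_iff hα h13.ne' h32.ne hγ3]
  refine hL.exists_hasEigenvector hA (by simp [heunRaise']) (fun m hm => ?_) (leval e1)
    (by simp [sub_ne_zero, (h32.trans h13).ne']) (by simp) hE
  rw [mem_degreeLE, ← natDegree_le_iff_degree_le]
  refine natDegree_mul_le.trans ?_
  simp only [natDegree_pow, natDegree_X_sub_C]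
  omega

end HeunOperator

section Wronskian

lemma eval_eq_rootMultiplicity_sub_mul_eval {p r u v : ℝ[X]} {e : ℝ} (hp : p ≠ 0) (hr : r ≠ 0)
    (h : (X - C e) * u * wronskian p r = v * (p * r)) :
    v.eval e = (r.rootMultiplicity e - p.rootMultiplicity e) * u.eval e := by
  obtain ⟨p', hp', hpe⟩ := exists_eq_pow_rootMultiplicity_mul_and_not_dvd p hp e
  obtain ⟨r', hr', hre⟩ := exists_eq_pow_rootMultiplicity_mul_and_not_dvd r hr e
  generalize p.rootMultiplicity e = i at hp' ⊢
  generalize r.rootMultiplicity e = j at hr' ⊢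
  subst hp' hr'
  have hi := X_sub_C_mul_derivative_pow e i
  have hj := X_sub_C_mul_derivative_pow e j
  have hcancel : (X - C e) * (u * wronskian p' r') + (C (j : ℝ) - C (i : ℝ)) * u * (p' * r') =
      v * (p' * r') := by
    refine mul_left_cancel₀ (mul_ne_zero (pow_ne_zero i (X_sub_C_ne_zero e))
      (pow_ne_zero j (X_sub_C_ne_zero e))) ?_
    simp only [wronskian, derivative_mul] at h ⊢
    linear_combination h - u * (X - C e) ^ i * p' * r' * hj + u * (X - C e) ^ j * p' * r' * hi
  rw [dvd_iff_isRoot, IsRoot] at hpe hre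
  refine mul_right_cancel₀ (mul_ne_zero hpe hre) ?_
  simpa [mul_assoc] using (congrArg (eval e) hcancel).symm

lemma mul_derivative_wronskian_add {F K δ κ q₁ q₂ c₁ c₂ p r : ℝ[X]} {μ : ℝ}
    (hp : F * K * derivative (derivative p) + q₁ * derivative p + c₁ * p = C μ * p)
    (hr : F * K * derivative (derivative r) + q₂ * derivative r + c₂ * r = C μ * r)
    (hq₁ : q₁ = derivative F * K - δ * K + F * κ) (hq₂ : q₂ = derivative F * K + δ * K + F * κ)
    (hc : c₂ - c₁ = K * derivative δ + κ * δ) :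
    K * derivative (F * wronskian p r + δ * (p * r)) = -κ * (F * wronskian p r + δ * (p * r)) := by
  subst hq₁ hq₂
  simp only [wronskian, derivative_mul, derivative_add, derivative_sub]
  linear_combination p * hr - r * hp - p * r * hc

/-- By Abel's identity the combination `F * wronskian p r + δ * (p * r)` would have order `-t` at
`e'`, so it vanishes; then the orders of `p` and `r` at `e` would differ by `s`. -/
theorem eq_zero_or_eq_zero_of_nonint_exponents {f k δ κ q₁ q₂ c₁ c₂ p r : ℝ[X]} {e e' s t μ : ℝ}
    (hp : (X - C e) * f * ((X - C e') * k) * derivative (derivative p) + q₁ * derivative p + c₁ * p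
      = C μ * p)
    (hr : (X - C e) * f * ((X - C e') * k) * derivative (derivative r) + q₂ * derivative r + c₂ * r
      = C μ * r)
    (hq₁ : q₁ = derivative ((X - C e) * f) * ((X - C e') * k) - δ * ((X - C e') * k)
      + (X - C e) * f * κ)
    (hq₂ : q₂ = derivative ((X - C e) * f) * ((X - C e') * k) + δ * ((X - C e') * k)
      + (X - C e) * f * κ)
    (hc : c₂ - c₁ = (X - C e') * k * derivative δ + κ * δ)
    (hf : f.eval e ≠ 0) (hδ : δ.eval e = s * f.eval e) (hs : ∀ n : ℤ, s ≠ n)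
    (hk : k.eval e' ≠ 0) (hκ : κ.eval e' = t * k.eval e') (ht : ∀ n : ℤ, t ≠ n) :
    p = 0 ∨ r = 0 := by
  by_contra! hpr
  have habel := mul_derivative_wronskian_add hp hr hq₁ hq₂ hc
  generalize hG : (X - C e) * f * wronskian p r + δ * (p * r) = G at habel
  have hG₀ : G = 0 := by
    by_contra hne
    have hmult := eval_eq_rootMultiplicity_sub_mul_eval (p := 1) (u := k) (v := -κ) (e := e')
      one_ne_zero hne (by simpa [wronskian] using habel)
    refine ht (-G.rootMultiplicity e') (mul_right_cancel₀ hk ?_)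
    rw [eval_neg, hκ, ← C_1, rootMultiplicity_C] at hmult
    push_cast at hmult ⊢
    linear_combination -hmult
  have hmult := eval_eq_rootMultiplicity_sub_mul_eval (u := f) (v := -δ) (e := e) hpr.1 hpr.2
    (by linear_combination hG + hG₀)
  refine hs (p.rootMultiplicity e - r.rootMultiplicity e) (mul_right_cancel₀ hf ?_)
  rw [eval_neg, hδ] at hmult
  push_cast
  linear_combination -hmult

variable {e1 e2 e3 a0 a1 a2 a3 b0 b1 b2 b3 μ : ℝ}

lemma not_hasEigenvalue_heunOp_reflect₀₁ (h23 : e2 ≠ e3)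
    (h₀ : a0 + b0 = 1 / 2) (h₁ : a1 + b1 = 1 / 2)
    (hγ1 : ∀ n : ℤ, 2 * a1 + 1 / 2 ≠ n) (hγ3 : ∀ n : ℤ, 2 * a3 + 1 / 2 ≠ n)
    (hμ : (heunOp e1 e2 e3 a0 a1 a2 a3).HasEigenvalue μ) :
    ¬ (heunOp e1 e2 e3 b0 b1 a2 a3).HasEigenvalue μ := by
  obtain rfl := eq_sub_of_add_eq' h₀
  obtain rfl := eq_sub_of_add_eq' h₁
  intro hμ'
  obtain ⟨p, hp, hp₀⟩ := hμ.exists_hasEigenvector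
  obtain ⟨r, hr, hr₀⟩ := hμ'.exists_hasEigenvector
  rw [Module.End.mem_eigenspace_iff, heunOp_apply, smul_eq_C_mul] at hp hr
  have hprod : (X - C e1) * (X - C e2) * (X - C e3) =
      (X - C e1) * 1 * ((X - C e3) * (X - C e2)) := by ring
  rw [hprod] at hp hr
  refine (eq_zero_or_eq_zero_of_nonint_exponents (δ := C (1 - (2 * a1 + 1 / 2)))
    (κ := C (2 * a2 + 1 / 2) * (X - C e3) + C (2 * a3 + 1 / 2) * (X - C e2))
    (s := 1 - (2 * a1 + 1 / 2)) hp hr ?_ ?_ ?_ (by simp) (by simp)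
    (fun n hn => hγ1 (1 - n) (by push_cast; linear_combination -hn)) ?_ ?_ hγ3).elim hp₀ hr₀
  · refine Polynomial.funext fun x => ?_
    simp only [derivative_mul, derivative_sub, derivative_X, derivative_C, derivative_one,
      eval_add, eval_sub, eval_mul, eval_X, eval_C, eval_one, eval_zero]
    ring
  · refine Polynomial.funext fun x => ?_
    simp only [derivative_mul, derivative_sub, derivative_X, derivative_C, derivative_one,
      eval_add, eval_sub, eval_mul, eval_X, eval_C, eval_one, eval_zero]
    ring
  · refine Polynomial.funext fun x => ?_
    simp only [heunAccessory, derivative_C, eval_add, eval_sub, eval_mul, eval_X, eval_C, eval_zero]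
    ring
  · simpa [sub_eq_zero] using h23.symm
  · simp

lemma not_hasEigenvalue_heunOp_reflect₁₂ (h12 : e1 ≠ e2)
    (h₁ : a1 + b1 = 1 / 2) (h₂ : a2 + b2 = 1 / 2)
    (hγ1 : ∀ n : ℤ, 2 * a1 + 1 / 2 ≠ n) (hγ3 : ∀ n : ℤ, 2 * a3 + 1 / 2 ≠ n)
    (hμ : (heunOp e1 e2 e3 a0 a1 a2 a3).HasEigenvalue μ) :
    ¬ (heunOp e1 e2 e3 a0 b1 b2 a3).HasEigenvalue μ := by
  obtain rfl := eq_sub_of_add_eq' h₁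
  obtain rfl := eq_sub_of_add_eq' h₂
  intro hμ'
  obtain ⟨p, hp, hp₀⟩ := hμ.exists_hasEigenvector
  obtain ⟨r, hr, hr₀⟩ := hμ'.exists_hasEigenvector
  rw [Module.End.mem_eigenspace_iff, heunOp_apply, smul_eq_C_mul] at hp hr
  rw [← mul_one (X - C e3)] at hp hr
  refine (eq_zero_or_eq_zero_of_nonint_exponents (f := X - C e2) (k := 1)
    (δ := C (1 - (2 * a1 + 1 / 2)) * (X - C e2) + C (1 - (2 * a2 + 1 / 2)) * (X - C e1))
    (κ := C (2 * a3 + 1 / 2)) (s := 1 - (2 * a1 + 1 / 2)) hp hr ?_ ?_ ?_ ?_ ?_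
    (fun n hn => hγ1 (1 - n) (by push_cast; linear_combination -hn)) (by simp) (by simp)
    hγ3).elim hp₀ hr₀
  · refine Polynomial.funext fun x => ?_
    simp only [derivative_mul, derivative_sub, derivative_X, derivative_C, eval_add,
      eval_sub, eval_mul, eval_X, eval_C, eval_one, eval_zero]
    ring
  · refine Polynomial.funext fun x => ?_
    simp only [derivative_mul, derivative_sub, derivative_X, derivative_C, eval_add,
      eval_sub, eval_mul, eval_X, eval_C, eval_one, eval_zero]
    ring
  · refine Polynomial.funext fun x => ?_
    simp only [heunAccessory, derivative_add, derivative_mul, derivative_sub, derivative_X,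
      derivative_C, eval_add, eval_sub, eval_mul, eval_X, eval_C, eval_one, eval_zero]
    ring
  · simpa [sub_eq_zero] using h12
  · simp

lemma not_hasEigenvalue_heunOp_reflect₀₂ (h13 : e1 ≠ e3) (h₀ : a0 + b0 = 1 / 2)
    (h₂ : a2 + b2 = 1 / 2) (hγ2 : ∀ n : ℤ, 2 * a2 + 1 / 2 ≠ n)
    (hγ3 : ∀ n : ℤ, 2 * a3 + 1 / 2 ≠ n)
    (hμ : (heunOp e1 e2 e3 a0 a1 a2 a3).HasEigenvalue μ) :
    ¬ (heunOp e1 e2 e3 b0 a1 b2 a3).HasEigenvalue μ := by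
  rw [← heunOp_swap₁₂] at hμ ⊢
  exact not_hasEigenvalue_heunOp_reflect₀₁ h13 h₀ h₂ hγ2 hγ3 hμ

lemma not_hasEigenvalue_heunOp_reflect₀₃ (h12 : e1 ≠ e2) (h₀ : a0 + b0 = 1 / 2)
    (h₃ : a3 + b3 = 1 / 2) (hγ1 : ∀ n : ℤ, 2 * a1 + 1 / 2 ≠ n)
    (hγ3 : ∀ n : ℤ, 2 * a3 + 1 / 2 ≠ n)
    (hμ : (heunOp e1 e2 e3 a0 a1 a2 a3).HasEigenvalue μ) :
    ¬ (heunOp e1 e2 e3 b0 a1 a2 b3).HasEigenvalue μ := by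
  rw [← heunOp_swap₁₃] at hμ ⊢
  exact not_hasEigenvalue_heunOp_reflect₀₁ h12.symm h₀ h₃ hγ3 hγ1 hμ

lemma not_hasEigenvalue_heunOp_reflect₂₃ (h23 : e2 ≠ e3) (h₂ : a2 + b2 = 1 / 2)
    (h₃ : a3 + b3 = 1 / 2) (hγ1 : ∀ n : ℤ, 2 * a1 + 1 / 2 ≠ n)
    (hγ3 : ∀ n : ℤ, 2 * a3 + 1 / 2 ≠ n)
    (hμ : (heunOp e1 e2 e3 a0 a1 a2 a3).HasEigenvalue μ) :
    ¬ (heunOp e1 e2 e3 a0 a1 b2 b3).HasEigenvalue μ := by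
  rw [← heunOp_swap₁₃] at hμ ⊢
  exact not_hasEigenvalue_heunOp_reflect₁₂ h23.symm h₃ h₂ hγ3 hγ1 hμ

lemma not_hasEigenvalue_heunOp_reflect₁₃ (h13 : e1 ≠ e3) (h₁ : a1 + b1 = 1 / 2)
    (h₃ : a3 + b3 = 1 / 2) (hγ2 : ∀ n : ℤ, 2 * a2 + 1 / 2 ≠ n)
    (hγ3 : ∀ n : ℤ, 2 * a3 + 1 / 2 ≠ n)
    (hμ : (heunOp e1 e2 e3 a0 a1 a2 a3).HasEigenvalue μ) :
    ¬ (heunOp e1 e2 e3 a0 b1 a2 b3).HasEigenvalue μ := by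
  rw [← heunOp_swap₁₂] at hμ ⊢
  exact not_hasEigenvalue_heunOp_reflect₂₃ h13 h₁ h₃ hγ2 hγ3 hμ

end Wronskian

section SpectralFactor

/-- `P` has simple real roots, each of which is an eigenvalue `E` of the Treibich–Verdier operator
`-4 * L` (whence `-(1 / 4) * E` is one of `L`). -/
def IsSpectralFactor (L : Module.End ℝ ℝ[X]) (P : ℝ[X]) : Prop :=
  HasSimpleRealRoots P ∧ ∀ E, P.IsRoot E → L.HasEigenvalue (-(1 / 4) * E)

namespace IsSpectralFactor

variable {L M : Module.End ℝ ℝ[X]} {P Q : ℝ[X]}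

lemma one : IsSpectralFactor L 1 :=
  ⟨.one, fun E hE => by simp at hE⟩

lemma isCoprime (hP : IsSpectralFactor L P) (hQ : IsSpectralFactor M Q)
    (hLM : ∀ μ, L.HasEigenvalue μ → ¬ M.HasEigenvalue μ) : IsCoprime P Q :=
  hP.1.isCoprime fun E hPE hQE => hLM _ (hP.2 E hPE) (hQ.2 E hQE)

end IsSpectralFactor

variable {e1 e2 e3 a0 a1 a2 a3 : ℝ} {l0 l1 l2 l3 N : ℕ}

lemma isSpectralFactor_specP (h13 : e1 ≠ e3) (h23 : e2 ≠ e3)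
    (hγ3 : ∀ n : ℤ, 2 * a3 + 1 / 2 ≠ n) (hα : a0 + a1 + a2 + a3 = -(N : ℝ))
    (hroots : HasSimpleRealRoots (heunC e1 e2 e3 a0 a1 a2 a3 (N + 1))) :
    IsSpectralFactor (heunOp e1 e2 e3 a0 a1 a2 a3) (specP e1 e2 e3 a0 a1 a2 a3 N) := by
  have hlead : ((heunC e1 e2 e3 a0 a1 a2 a3 (N + 1)).leadingCoeff)⁻¹ ≠ 0 :=
    inv_ne_zero (leadingCoeff_ne_zero.2 (heunC_succ_ne_zero h13 h23 hγ3 N))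
  refine ⟨hroots.C_mul hlead, fun E hE => ?_⟩
  have hE : (heunC e1 e2 e3 a0 a1 a2 a3 (N + 1)).IsRoot E := by
    simpa [specP, hlead] using hE
  obtain ⟨y, -, hy⟩ := (isRoot_heunC_iff hα h13 h23 hγ3).1 hE
  exact Module.End.hasEigenvalue_of_hasEigenvector hy

lemma two_mul_neg_half_add_half_ne_intCast (l : ℕ) (n : ℤ) :
    2 * (-(l : ℝ) / 2) + 1 / 2 ≠ n := by
  intro h
  have : (1 - 2 * l : ℤ) = 2 * n := by
    exact_mod_cast (by linear_combination 2 * h : (1 - 2 * l : ℝ) = 2 * n)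
  omega

lemma two_mul_succ_half_add_half_ne_intCast (l : ℕ) (n : ℤ) :
    2 * (((l : ℝ) + 1) / 2) + 1 / 2 ≠ n := by
  intro h
  have : (2 * l + 3 : ℤ) = 2 * n := by
    exact_mod_cast (by linear_combination 2 * h : (2 * l + 3 : ℝ) = 2 * n)
  omega

lemma isSpectralFactor_specP0 (hl : l0 + l3 = l1 + l2 + 1) (h13 : e3 < e1) (h32 : e2 < e3) :
    IsSpectralFactor (heunOp e1 e2 e3 (((l0 : ℝ) + 1) / 2) (-(l1 : ℝ) / 2) (-(l2 : ℝ) / 2)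
      (-(l3 : ℝ) / 2)) (specP0 e1 e2 e3 l0 l1 l2 l3) := by
  have hl' : (l0 : ℝ) + l3 = l1 + l2 + 1 := by exact_mod_cast hl
  rw [specP0, if_neg (by omega), if_neg (by omega)]
  rcases l3 with _ | N
  · rw [if_pos (by omega)]
    exact .one
  have hγ3 := two_mul_neg_half_add_half_ne_intCast (N + 1)
  rw [if_neg (by omega), show (l1 + l2 + (N + 1) - l0 - 1) / 2 = N by omega]
  push_cast at hl' hγ3 ⊢
  have hα : ((l0 : ℝ) + 1) / 2 + -(l1 : ℝ) / 2 + -(l2 : ℝ) / 2 + -((N : ℝ) + 1) / 2 = -N := by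
    linear_combination hl' / 2
  refine isSpectralFactor_specP h13.ne' h32.ne hγ3 hα
    (hasSimpleRealRoots_heunC h13 h32 hγ3 hα fun m hm => mul_pos_of_neg_of_neg ?_ ?_)
  all_goals
    have hm : (m : ℝ) + 1 ≤ N := by exact_mod_cast hm
    linarith [l0.cast_nonneg (α := ℝ)]

lemma isSpectralFactor_specP1 (hl : l0 + l3 = l1 + l2 + 1) (h13 : e3 < e1) (h32 : e2 < e3) :
    IsSpectralFactor (heunOp e1 e2 e3 (-(l0 : ℝ) / 2) (((l1 : ℝ) + 1) / 2) (-(l2 : ℝ) / 2)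
      (-(l3 : ℝ) / 2)) (specP1 e1 e2 e3 l0 l1 l2 l3) := by
  have hl' : (l0 : ℝ) + l3 = l1 + l2 + 1 := by exact_mod_cast hl
  rw [specP1, if_neg (by omega), if_neg (by omega), if_neg (by omega),
    show (l0 + l2 + l3 - l1 - 1) / 2 = l2 by omega]
  have hα : -(l0 : ℝ) / 2 + ((l1 : ℝ) + 1) / 2 + -(l2 : ℝ) / 2 + -(l3 : ℝ) / 2 = -l2 := by
    linear_combination -hl' / 2
  have hγ1 := two_mul_succ_half_add_half_ne_intCast l1
  have hγ3 := two_mul_neg_half_add_half_ne_intCast l3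
  refine isSpectralFactor_specP h13.ne' h32.ne hγ3 hα
    (hasSimpleRealRoots_heunC' h13 h32 hγ1 hγ3 hα fun m _ => mul_pos ?_ ?_)
  · positivity
  · linarith [m.cast_nonneg (α := ℝ)]

lemma isSpectralFactor_specP2 (hl : l0 + l3 = l1 + l2 + 1) (h13 : e3 < e1) (h32 : e2 < e3) :
    IsSpectralFactor (heunOp e1 e2 e3 (-(l0 : ℝ) / 2) (-(l1 : ℝ) / 2) (((l2 : ℝ) + 1) / 2)
      (-(l3 : ℝ) / 2)) (specP2 e1 e2 e3 l0 l1 l2 l3) := by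
  have hl' : (l0 : ℝ) + l3 = l1 + l2 + 1 := by exact_mod_cast hl
  rw [specP2, if_neg (by omega), if_neg (by omega), if_neg (by omega),
    show (l0 + l1 + l3 - l2 - 1) / 2 = l1 by omega]
  have hα : -(l0 : ℝ) / 2 + -(l1 : ℝ) / 2 + ((l2 : ℝ) + 1) / 2 + -(l3 : ℝ) / 2 = -l1 := by
    linear_combination -hl' / 2
  have hγ1 := two_mul_neg_half_add_half_ne_intCast l1
  have hγ3 := two_mul_neg_half_add_half_ne_intCast l3
  refine isSpectralFactor_specP h13.ne' h32.ne hγ3 hα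
    (hasSimpleRealRoots_heunC' h13 h32 hγ1 hγ3 hα fun m hm => mul_pos_of_neg_of_neg ?_ ?_)
  all_goals
    have hm : (m : ℝ) + 1 ≤ l1 := by exact_mod_cast hm
    linarith [l2.cast_nonneg (α := ℝ)]

lemma isSpectralFactor_specP3 (hl : l0 + l3 = l1 + l2 + 1) (h13 : e3 < e1) (h32 : e2 < e3) :
    IsSpectralFactor (heunOp e1 e2 e3 (-(l0 : ℝ) / 2) (-(l1 : ℝ) / 2) (-(l2 : ℝ) / 2)
      (((l3 : ℝ) + 1) / 2)) (specP3 e1 e2 e3 l0 l1 l2 l3) := by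
  have hl' : (l0 : ℝ) + l3 = l1 + l2 + 1 := by exact_mod_cast hl
  rw [specP3, if_neg (by omega), if_neg (by omega)]
  rcases l0 with _ | N
  · rw [if_pos (by omega)]
    exact .one
  have hγ3 := two_mul_succ_half_add_half_ne_intCast l3
  rw [if_neg (by omega), show (N + 1 + l1 + l2 - l3 - 1) / 2 = N by omega]
  push_cast at hl' ⊢
  have hα : -((N : ℝ) + 1) / 2 + -(l1 : ℝ) / 2 + -(l2 : ℝ) / 2 + ((l3 : ℝ) + 1) / 2 = -N := by
    linear_combination hl' / 2
  refine isSpectralFactor_specP h13.ne' h32.ne hγ3 hα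
    (hasSimpleRealRoots_heunC h13 h32 hγ3 hα fun m _ => mul_pos (by positivity) ?_)
  linarith [m.cast_nonneg (α := ℝ)]

end SpectralFactor

theorem specQ_real_distinct_roots_case3_general
    (l0 l1 l2 l3 : ℕ) (hl : l0 + l3 = l1 + l2 + 1)
    (e1 e2 e3 : ℝ) (h13 : e3 < e1) (h32 : e2 < e3) :
    (specQ e1 e2 e3 l0 l1 l2 l3).map (algebraMap ℝ ℂ) ≠ 0 ∧
    ((specQ e1 e2 e3 l0 l1 l2 l3).map (algebraMap ℝ ℂ)).roots.Nodup ∧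
    ∀ z ∈ ((specQ e1 e2 e3 l0 l1 l2 l3).map (algebraMap ℝ ℂ)).roots, z.im = 0 := by
  have hP0 := isSpectralFactor_specP0 hl h13 h32
  have hP1 := isSpectralFactor_specP1 hl h13 h32
  have hP2 := isSpectralFactor_specP2 hl h13 h32
  have hP3 := isSpectralFactor_specP3 hl h13 h32
  have hneg := two_mul_neg_half_add_half_ne_intCast
  have hcop01 := hP0.isCoprime hP1 fun _ =>
    not_hasEigenvalue_heunOp_reflect₀₁ h32.ne (by ring) (by ring) (hneg l1) (hneg l3)
  have hcop02 := hP0.isCoprime hP2 fun _ =>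
    not_hasEigenvalue_heunOp_reflect₀₂ h13.ne' (by ring) (by ring) (hneg l2) (hneg l3)
  have hcop03 := hP0.isCoprime hP3 fun _ =>
    not_hasEigenvalue_heunOp_reflect₀₃ (h32.trans h13).ne' (by ring) (by ring) (hneg l1) (hneg l3)
  have hcop12 := hP1.isCoprime hP2 fun _ => not_hasEigenvalue_heunOp_reflect₁₂ (h32.trans h13).ne'
    (by ring) (by ring) (two_mul_succ_half_add_half_ne_intCast l1) (hneg l3)
  have hcop13 := hP1.isCoprime hP3 fun _ =>
    not_hasEigenvalue_heunOp_reflect₁₃ h13.ne' (by ring) (by ring) (hneg l2) (hneg l3)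
  have hcop23 := hP2.isCoprime hP3 fun _ =>
    not_hasEigenvalue_heunOp_reflect₂₃ h32.ne (by ring) (by ring) (hneg l1) (hneg l3)
  exact (((hP0.1.mul hP1.1 hcop01).mul hP2.1 (hcop02.mul_left hcop12)).mul hP3.1
    ((hcop03.mul_left hcop13).mul_left hcop23)).roots_map_complex

/-- If `l0 + l3 = l1 + l2 + 1`, `l0 + l1 ≥ l2 + l3 + 1` and
`l0 + l2 ≥ l1 + l3 + 1`, with `e1 > e3 > e2` and `e1+e2+e3 = 0` (purely imaginary modulus),
then all zeros of the spectral polynomial `Q^{(l0,l1,l2,l3)}` are real and unequal. -/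
theorem specQ_real_distinct_roots_case3
    (l0 l1 l2 l3 : ℕ) (hl : l0 + l3 = l1 + l2 + 1)
    (hl1 : l2 + l3 + 1 ≤ l0 + l1) (hl2 : l1 + l3 + 1 ≤ l0 + l2)
    (e1 e2 e3 : ℝ) (h13 : e3 < e1) (h32 : e2 < e3) (hsum : e1 + e2 + e3 = 0) :
    (specQ e1 e2 e3 l0 l1 l2 l3).map (algebraMap ℝ ℂ) ≠ 0 ∧
    ((specQ e1 e2 e3 l0 l1 l2 l3).map (algebraMap ℝ ℂ)).roots.Nodup ∧
    ∀ z ∈ ((specQ e1 e2 e3 l0 l1 l2 l3).map (algebraMap ℝ ℂ)).roots, z.im = 0 :=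
  specQ_real_distinct_roots_case3_general l0 l1 l2 l3 hl e1 e2 e3 h13 h32
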